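/- For all integers k ≥ 1, n ≥ 1 and all sets A, B of 2-element subsets of {1,…,n}, the graph G_{k,n}(A,B) contains an induced subgraph isomorphic to the path P_{4k+3} on 4k+3 vertices if and only if A ∩ B ≠ ∅; equivalently, G_{k,n}(A,B) is P_{4k+3}-induced-subgraph-free if and only if A and B are disjoint. -/

import Mathlib

/-!
The graph `G_{k,n}(A,B)` from the paper "Local certification of forbidden subgraphs".

Vertices: clique vertices `(b, ℓ, i)` where `b : Bool` is the side (false = superscript 0,
true = superscript 1), `ℓ : Fin (2*k)` is the (0-based) level, so `K^b_{ℓ+1}` in the paper's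
1-based notation, and `i : Fin n` is the label inside the clique; plus three special vertices
`Sum.inr 0 = v₀`, `Sum.inr 1 = v₁`, `Sum.inr 2 = w`.

A set `A` of 2-element subsets of `{1,…,n}` is encoded as `A : Set (Sym2 (Fin n))` all of whose
members are non-diagonal.
-/

/-- Vertex type of `G_{k,n}(A,B)`. -/
abbrev GknVert (k n : ℕ) := (Bool × Fin (2 * k) × Fin n) ⊕ Fin 3

/-- The edges of `G_{k,n}(A,B)`, given in one direction; the graph is obtained by
symmetrizing with `SimpleGraph.fromRel`. -/
def gknRel (k n : ℕ) (A B : Set (Sym2 (Fin n))) :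
    GknVert k n → GknVert k n → Prop
  | Sum.inl (b, l, i), Sum.inl (b', l', j) =>
      -- edges inside one clique
      (b = b' ∧ l = l' ∧ i ≠ j) ∨
      -- the bipartite graph `G_A` between `K^0_1` and `K^1_1`
      (b = false ∧ b' = true ∧ (l : ℕ) = 0 ∧ (l' : ℕ) = 0 ∧ (i = j ∨ s(i, j) ∉ A)) ∨
      -- the bipartite graph `G_B` between `K^0_{2k}` and `K^1_{2k}`
      (b = false ∧ b' = true ∧ (l : ℕ) = 2 * k - 1 ∧ (l' : ℕ) = 2 * k - 1 ∧
        (i = j ∨ s(i, j) ∉ B)) ∨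
      -- the perfect matchings between `K^0_ℓ` and `K^1_ℓ` for `2 ≤ ℓ ≤ 2k-1` (1-based)
      (b ≠ b' ∧ l = l' ∧ 1 ≤ (l : ℕ) ∧ (l : ℕ) ≤ 2 * k - 2 ∧ i = j) ∨
      -- the antimatchings between consecutive levels (all four pairs of cliques)
      ((l' : ℕ) = (l : ℕ) + 1 ∧ i ≠ j)
  | Sum.inl (b, l, _), Sum.inr s =>
      -- `v₀` is complete to `K^0_1`, `v₁` is complete to `K^1_1`,
      -- `w` is complete to `K^0_{2k} ∪ K^1_{2k}`
      (s = 0 ∧ b = false ∧ (l : ℕ) = 0) ∨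
      (s = 1 ∧ b = true ∧ (l : ℕ) = 0) ∨
      (s = 2 ∧ (l : ℕ) = 2 * k - 1)
  | Sum.inr _, Sum.inl _ => False
  | Sum.inr _, Sum.inr _ => False

/-- The graph `G_{k,n}(A,B)`. -/
def Gkn (k n : ℕ) (A B : Set (Sym2 (Fin n))) : SimpleGraph (GknVert k n) :=
  SimpleGraph.fromRel (gknRel k n A B)

/-!
An independent set contains at most two vertices of any two consecutive levels, hence at most `2k`
clique vertices in all. A path on `4k + 3` vertices is a union of two independent sets, so an
induced one has at most `4k` clique vertices and must pass through `v₀`, `v₁` and `w`. The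
neighbourhoods of `v₀` and `v₁` are cliques, so these two are its endpoints, and the same bound on
independent sets forces the path, followed from either end, to climb one level at each step. The
two vertices thus reached on a level are not adjacent, so they lie on opposite sides with distinct
labels, and the antimatchings make the two labels trade places from each level to the next. The
unordered pair of labels is therefore the same on all levels; it belongs to `A` because of the
first level and to `B` because of the last. Conversely, a pair `{i, j}` in `A ∩ B` prescribes the
labels of an induced path of this shape.
-/

section PathGraph

open SimpleGraph

variable {V : Type*} {G : SimpleGraph V} {m : ℕ}

lemma adj_pathGraph_embedding_iff (f : pathGraph m ↪g G) (a b : Fin m) :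
    G.Adj (f a) (f b) ↔ a.val + 1 = b.val ∨ b.val + 1 = a.val :=
  f.map_adj_iff.trans pathGraph_adj

/-- The reversal of the path on `m` vertices, as a graph automorphism. -/
def pathGraphRevIso (m : ℕ) : pathGraph m ≃g pathGraph m where
  toEquiv := Fin.revPerm
  map_rel_iff' {a b} := by
    simp only [Fin.revPerm_apply, pathGraph_adj, Fin.val_rev]
    omega

lemma eq_zero_or_eq_last_of_isClique_neighborSet (f : pathGraph (m + 1) ↪g G) {a : Fin (m + 1)}
    (ha : G.IsClique (G.neighborSet (f a))) : a = 0 ∨ a = Fin.last m := by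
  by_contra! h
  have hm : a.val ≠ m := fun e => h.2 (Fin.ext e)
  let p : Fin (m + 1) := ⟨a - 1, by omega⟩
  let q : Fin (m + 1) := ⟨a + 1, by omega⟩
  have hp : f p ∈ G.neighborSet (f a) := (adj_pathGraph_embedding_iff f a p).2 (by grind)
  have hq : f q ∈ G.neighborSet (f a) := (adj_pathGraph_embedding_iff f a q).2 (by grind)
  have hpq : G.Adj (f p) (f q) := ha hp hq (f.injective.ne (by grind))
  grind [adj_pathGraph_embedding_iff]

end PathGraph

namespace Gkn

open SimpleGraph Finset

variable {k n : ℕ} {A B : Set (Sym2 (Fin n))}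

/-- The vertices of the `4k` cliques. -/
abbrev CliqueVertex (k n : ℕ) := Bool × Fin (2 * k) × Fin n

/-- The superscript `b` of the clique `K^b_{l+1}` containing a clique vertex. -/
abbrev CliqueVertex.side (x : CliqueVertex k n) : Bool := x.1

/-- The 0-based level of a clique vertex: the cliques on level `l` are `K^0_{l+1}`, `K^1_{l+1}`. -/
abbrev CliqueVertex.level (x : CliqueVertex k n) : ℕ := x.2.1

/-- The label `i` of the clique vertex `K[i]`. -/
abbrev CliqueVertex.label (x : CliqueVertex k n) : Fin n := x.2.2

lemma CliqueVertex.level_lt (x : CliqueVertex k n) : x.level < 2 * k :=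
  x.2.1.isLt

lemma CliqueVertex.ext {x y : CliqueVertex k n} (hside : x.side = y.side)
    (hlevel : x.level = y.level) (hlabel : x.label = y.label) : x = y :=
  Prod.ext hside (Prod.ext (Fin.ext hlevel) hlabel)

section Adjacency

variable {x y : CliqueVertex k n} {s t : Fin 3}

lemma adj_inl_iff_of_same_clique (hside : x.side = y.side) (hlevel : x.level = y.level) :
    (Gkn k n A B).Adj (Sum.inl x) (Sum.inl y) ↔ x.label ≠ y.label := by
  obtain ⟨b, l, i⟩ := x
  obtain ⟨c, m, j⟩ := y
  obtain rfl : b = c := hside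
  obtain rfl : l = m := Fin.ext hlevel
  cases b <;> simp [Gkn, gknRel, eq_comm]

lemma adj_inl_iff_of_opposite_side (hside : x.side ≠ y.side) (hlevel : x.level = y.level) :
    (Gkn k n A B).Adj (Sum.inl x) (Sum.inl y) ↔
      x.label = y.label ∨ (x.level = 0 ∧ s(x.label, y.label) ∉ A) ∨
        (x.level = 2 * k - 1 ∧ s(x.label, y.label) ∉ B) := by
  obtain ⟨b, l, i⟩ := x
  obtain ⟨c, m, j⟩ := y
  obtain rfl : l = m := Fin.ext hlevel
  have label_pair_comm : s(i, j) = s(j, i) := Sym2.eq_swap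
  cases b <;> cases c <;> grind [Gkn, gknRel, fromRel_adj]

lemma adj_inl_iff_of_level_ne (hlevel : x.level ≠ y.level) :
    (Gkn k n A B).Adj (Sum.inl x) (Sum.inl y) ↔
      (x.level + 1 = y.level ∨ y.level + 1 = x.level) ∧ x.label ≠ y.label := by
  obtain ⟨b, l, i⟩ := x
  obtain ⟨c, m, j⟩ := y
  grind [Gkn, gknRel, fromRel_adj]

lemma adj_inr_inl_iff :
    (Gkn k n A B).Adj (Sum.inr s) (Sum.inl x) ↔
      (s = 0 ∧ x.side = false ∧ x.level = 0) ∨ (s = 1 ∧ x.side = true ∧ x.level = 0) ∨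
        (s = 2 ∧ x.level = 2 * k - 1) := by
  simp [Gkn, gknRel]

lemma not_adj_inr_inr : ¬ (Gkn k n A B).Adj (Sum.inr s) (Sum.inr t) := by
  simp [Gkn, gknRel]

lemma level_le_add_one_of_adj (h : (Gkn k n A B).Adj (Sum.inl x) (Sum.inl y)) :
    x.level ≤ y.level + 1 := by
  by_cases hlevel : x.level = y.level
  · omega
  · have := ((adj_inl_iff_of_level_ne hlevel).1 h).1
    omega

lemma side_ne_and_label_ne_of_not_adj (hne : x ≠ y) (hlevel : x.level = y.level)
    (h : ¬ (Gkn k n A B).Adj (Sum.inl x) (Sum.inl y)) : x.side ≠ y.side ∧ x.label ≠ y.label := by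
  have hside : x.side ≠ y.side := fun hside => h <| (adj_inl_iff_of_same_clique hside hlevel).2
    fun hlabel => hne (CliqueVertex.ext hside hlevel hlabel)
  exact ⟨hside, fun hlabel => h ((adj_inl_iff_of_opposite_side hside hlevel).2 (Or.inl hlabel))⟩

lemma label_eq_of_not_adj (hlevel : x.level + 1 = y.level)
    (h : ¬ (Gkn k n A B).Adj (Sum.inl x) (Sum.inl y)) : x.label = y.label := by
  by_contra hlabel
  exact h ((adj_inl_iff_of_level_ne (by grind)).2 ⟨Or.inl hlevel, hlabel⟩)

lemma level_label_cases_of_not_adj (hne : x ≠ y) (hxy : x.level ≤ y.level + 1)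
    (hyx : y.level ≤ x.level + 1) (h : ¬ (Gkn k n A B).Adj (Sum.inl x) (Sum.inl y)) :
    (x.level = y.level ∧ x.side ≠ y.side ∧ x.label ≠ y.label) ∨
      (x.level ≠ y.level ∧ x.label = y.label) := by
  by_cases hlevel : x.level = y.level
  · exact Or.inl ⟨hlevel, side_ne_and_label_ne_of_not_adj hne hlevel h⟩
  · refine Or.inr ⟨hlevel, ?_⟩
    rcases (by omega : x.level + 1 = y.level ∨ y.level + 1 = x.level) with hlt | hgt
    · exact label_eq_of_not_adj hlt h
    · exact (label_eq_of_not_adj hgt (mt Adj.symm h)).symm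

lemma isClique_neighborSet_inr (hs : s ≠ 2) :
    (Gkn k n A B).IsClique ((Gkn k n A B).neighborSet (Sum.inr s)) := by
  rintro (x | t) hx (y | u) hy hne
  · rw [mem_neighborSet, adj_inr_inl_iff] at hx hy
    have hside : CliqueVertex.side x = CliqueVertex.side y := by grind
    have hlevel : CliqueVertex.level x = CliqueVertex.level y := by grind
    exact (adj_inl_iff_of_same_clique hside hlevel).2 fun hlabel =>
      hne (congrArg Sum.inl (CliqueVertex.ext hside hlevel hlabel))
  · exact absurd hy not_adj_inr_inr
  · exact absurd hx not_adj_inr_inr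
  · exact absurd hx not_adj_inr_inr

end Adjacency

section IndependentSets

/- Three pairwise nonadjacent vertices cannot share a level, which has only two sides; and if just
two of them did, the third would carry both of their distinct labels. -/
lemma exists_adj_of_three_in_consecutive_levels {l : ℕ} {x y z : CliqueVertex k n}
    (hx : x.level = l ∨ x.level = l + 1) (hy : y.level = l ∨ y.level = l + 1)
    (hz : z.level = l ∨ z.level = l + 1) (hxy : x ≠ y) (hxz : x ≠ z) (hyz : y ≠ z) :
    (Gkn k n A B).Adj (Sum.inl x) (Sum.inl y) ∨ (Gkn k n A B).Adj (Sum.inl x) (Sum.inl z) ∨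
      (Gkn k n A B).Adj (Sum.inl y) (Sum.inl z) := by
  by_contra! h
  have sides_not_distinct : x.side = y.side ∨ x.side = z.side ∨ y.side = z.side := by
    cases x.side <;> cases y.side <;> cases z.side <;> simp
  have xy_cases := level_label_cases_of_not_adj hxy (by omega) (by omega) h.1
  have xz_cases := level_label_cases_of_not_adj hxz (by omega) (by omega) h.2.1
  have yz_cases := level_label_cases_of_not_adj hyz (by omega) (by omega) h.2.2
  grind

lemma card_toLeft_le_of_isIndepSet {s : Finset (GknVert k n)}
    (hs : (Gkn k n A B).IsIndepSet s) : #s.toLeft ≤ 2 * k := by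
  have card_level_pair_le (p : ℕ) : #{x ∈ s.toLeft | CliqueVertex.level x / 2 = p} ≤ 2 := by
    by_contra! h
    obtain ⟨x, y, z, hx, hy, hz, hxy, hxz, hyz⟩ := two_lt_card_iff.1 h
    simp only [mem_filter, mem_toLeft] at hx hy hz
    have nonadj {u v : CliqueVertex k n} (hu : Sum.inl u ∈ s) (hv : Sum.inl v ∈ s)
        (hne : u ≠ v) : ¬ (Gkn k n A B).Adj (Sum.inl u) (Sum.inl v) :=
      hs hu hv (Sum.inl_injective.ne hne)
    rcases exists_adj_of_three_in_consecutive_levels (A := A) (B := B) (l := 2 * p)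
      (by omega) (by omega) (by omega) hxy hxz hyz with h | h | h
    · exact nonadj hx.1 hy.1 hxy h
    · exact nonadj hx.1 hz.1 hxz h
    · exact nonadj hy.1 hz.1 hyz h
  have half_level_mem (x : CliqueVertex k n) : x.level / 2 ∈ range k :=
    mem_range.2 (Nat.div_lt_of_lt_mul x.level_lt)
  simpa using card_le_mul_card_image_of_maps_to (s := s.toLeft) (fun x _ => half_level_mem x) 2
    fun p _ => card_level_pair_le p

lemma card_toLeft_map_le_of_coloring {W α : Type*} [Fintype W] [Fintype α] {H : SimpleGraph W}
    (C : H.Coloring α) (f : H ↪g Gkn k n A B) :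
    #(univ.map f.toEmbedding).toLeft ≤ Fintype.card α * (2 * k) := by
  classical
  let image (c : α) : Finset (GknVert k n) := {w | C w = c}.toFinset.map f.toEmbedding
  have isIndepSet_image (c : α) : (Gkn k n A B).IsIndepSet (image c) := by
    intro u hu v hv _
    obtain ⟨a, ha, rfl⟩ := mem_map.1 (mem_coe.1 hu)
    obtain ⟨b, hb, rfl⟩ := mem_map.1 (mem_coe.1 hv)
    intro hab
    exact C.valid (f.map_adj_iff.1 hab) (by simp_all)
  calc #(univ.map f.toEmbedding).toLeft ≤ #(univ.biUnion fun c => (image c).toLeft) :=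
        card_le_card fun x hx => by simpa [image] using hx
    _ ≤ Fintype.card α * (2 * k) :=
        card_biUnion_le_card_mul _ _ _ fun c _ => card_toLeft_le_of_isIndepSet (isIndepSet_image c)

end IndependentSets

section InducedPath

variable (f : pathGraph (4 * k + 3) ↪g Gkn k n A B)

lemma ne_and_not_adj_of_add_two_le {a b : Fin (4 * k + 3)} {x y : CliqueVertex k n}
    (hx : f a = Sum.inl x) (hy : f b = Sum.inl y) (hab : a.val + 2 ≤ b.val) :
    x ≠ y ∧ ¬ (Gkn k n A B).Adj (Sum.inl x) (Sum.inl y) := by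
  constructor
  · rintro rfl
    have := f.injective (hx.trans hy.symm)
    omega
  · rw [← hx, ← hy, adj_pathGraph_embedding_iff]
    omega

lemma exists_apply_eq_inr (s : Fin 3) : ∃ a, f a = Sum.inr s := by
  let range := univ.map f.toEmbedding
  have hleft : #range.toLeft ≤ 2 * (2 * k) := by
    simpa using card_toLeft_map_le_of_coloring (pathGraph.bicoloring _) f
  have hcard : #range.toLeft + #range.toRight = 4 * k + 3 := by
    rw [card_toLeft_add_card_toRight, card_map, card_univ, Fintype.card_fin]
  have hright : range.toRight = univ := by
    refine eq_univ_of_card _ (le_antisymm (card_le_univ _) ?_)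
    rw [Fintype.card_fin]
    omega
  simpa [range] using hright.ge (mem_univ s)

lemma eq_zero_or_eq_last_of_apply_eq_inr {a : Fin (4 * k + 3)} {s : Fin 3} (hs : s ≠ 2)
    (ha : f a = Sum.inr s) : a = 0 ∨ a = Fin.last (4 * k + 2) :=
  eq_zero_or_eq_last_of_isClique_neighborSet f (ha ▸ isClique_neighborSet_inr hs)

lemma exists_apply_zero_eq_inr : ∃ s : Fin 3, s ≠ 2 ∧ f 0 = Sum.inr s := by
  obtain ⟨a, ha⟩ := exists_apply_eq_inr f 0
  obtain ⟨b, hb⟩ := exists_apply_eq_inr f 1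
  rcases eq_zero_or_eq_last_of_apply_eq_inr f (by decide) ha with rfl | rfl
  · exact ⟨0, by decide, ha⟩
  rcases eq_zero_or_eq_last_of_apply_eq_inr f (by decide) hb with rfl | rfl
  · exact ⟨1, by decide, hb⟩
  simp [ha] at hb

lemma position_eq_of_level_eq_zero {a : Fin (4 * k + 3)} {x : CliqueVertex k n}
    (ha : f a = Sum.inl x) (hx : x.level = 0) : a.val = 1 ∨ a.val = 4 * k + 1 := by
  have hadj : ∃ s : Fin 3, s ≠ 2 ∧ (Gkn k n A B).Adj (Sum.inr s) (f a) := by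
    rw [ha]
    cases hside : x.side
    · exact ⟨0, by decide, adj_inr_inl_iff.2 (by simp [hside, hx])⟩
    · exact ⟨1, by decide, adj_inr_inl_iff.2 (by simp [hside, hx])⟩
  obtain ⟨s, hs, hsa⟩ := hadj
  obtain ⟨c, hc⟩ := exists_apply_eq_inr f s
  rw [← hc, adj_pathGraph_embedding_iff] at hsa
  rcases eq_zero_or_eq_last_of_apply_eq_inr f hs hc with rfl | rfl
  · rw [Fin.val_zero] at hsa
    omega
  · rw [Fin.val_last] at hsa
    omega

lemma exists_apply_one_eq_inl : ∃ x : CliqueVertex k n, f 1 = Sum.inl x ∧ x.level = 0 := by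
  obtain ⟨s, hs, h₀⟩ := exists_apply_zero_eq_inr f
  have hadj : (Gkn k n A B).Adj (f 0) (f 1) := (adj_pathGraph_embedding_iff f 0 1).2 (by simp)
  rw [h₀] at hadj
  rcases h₁ : f 1 with x | t <;> rw [h₁] at hadj
  · rw [adj_inr_inl_iff] at hadj
    exact ⟨x, rfl, by tauto⟩
  · exact absurd hadj not_adj_inr_inr

lemma exists_apply_eq_inl_of_adj {x : CliqueVertex k n} {a : Fin (4 * k + 3)}
    (hx : x.level + 1 < 2 * k) (ha₀ : a ≠ 0) (ha : a ≠ Fin.last (4 * k + 2))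
    (hadj : (Gkn k n A B).Adj (Sum.inl x) (f a)) :
    ∃ y : CliqueVertex k n, f a = Sum.inl y ∧ x.level ≤ y.level + 1 ∧ y.level ≤ x.level + 1 := by
  rcases hfa : f a with y | s <;> rw [hfa] at hadj
  · exact ⟨y, rfl, level_le_add_one_of_adj hadj, level_le_add_one_of_adj hadj.symm⟩
  · have hs : s = 2 := by
      by_contra hs
      exact (eq_zero_or_eq_last_of_apply_eq_inr f hs hfa).elim ha₀ ha
    have := adj_inr_inl_iff.1 hadj.symm
    omega

/- If the path failed to climb from level `l + 1` to level `l + 2`, its next vertex would lie on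
level `l` or `l + 1`, forming an independent triple with the vertices that `f` and its reversal
already have on level `l`. -/
lemma exists_apply_eq_inl_of_level {l : ℕ} (hl : l < 2 * k) :
    ∃ x : CliqueVertex k n, f ⟨l + 1, by omega⟩ = Sum.inl x ∧ x.level = l := by
  induction l using Nat.strong_induction_on generalizing f with
  | _ l ih =>
  rcases l with _ | l
  · exact exists_apply_one_eq_inl f
  obtain ⟨x, hfx, hx⟩ := ih l (by omega) f (by omega)
  have hadj : (Gkn k n A B).Adj (Sum.inl x) (f ⟨l + 2, by omega⟩) := by
    rw [← hfx, adj_pathGraph_embedding_iff]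
    exact Or.inl rfl
  obtain ⟨z, hfz, hz⟩ := exists_apply_eq_inl_of_adj f (by omega) (by grind) (by grind) hadj
  refine ⟨z, hfz, ?_⟩
  by_contra hzl
  rcases l with _ | l
  · have := position_eq_of_level_eq_zero f hfz (by omega)
    grind
  obtain ⟨y, hfy, hy⟩ := ih l (by omega) f (by omega)
  obtain ⟨y', hfy', hy'⟩ := ih l (by omega) (f.comp (pathGraphRevIso _).toEmbedding) (by omega)
  change f (Fin.rev ⟨l + 1, by omega⟩) = Sum.inl y' at hfy'
  have hyz := ne_and_not_adj_of_add_two_le f hfy hfz (by grind)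
  have hyy' := ne_and_not_adj_of_add_two_le f hfy hfy' (by grind)
  have hzy' := ne_and_not_adj_of_add_two_le f hfz hfy' (by grind)
  rcases exists_adj_of_three_in_consecutive_levels (A := A) (B := B) (l := l)
    (by omega) (by omega) (by omega) hyz.1 hyy'.1 hzy'.1 with h | h | h
  · exact hyz.2 h
  · exact hyy'.2 h
  · exact hzy'.2 h

lemma exists_apply_rev_eq_inl_of_level {l : ℕ} (hl : l < 2 * k) :
    ∃ y : CliqueVertex k n, f (Fin.rev ⟨l + 1, by omega⟩) = Sum.inl y ∧ y.level = l :=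
  exists_apply_eq_inl_of_level (f.comp (pathGraphRevIso _).toEmbedding) hl

lemma level_of_apply_eq_inl {l : ℕ} (hl : l < 2 * k) {x y : CliqueVertex k n}
    (hx : f ⟨l + 1, by omega⟩ = Sum.inl x) (hy : f (Fin.rev ⟨l + 1, by omega⟩) = Sum.inl y) :
    x.level = l ∧ y.level = l := by
  obtain ⟨x', hx', hxl⟩ := exists_apply_eq_inl_of_level f hl
  obtain ⟨y', hy', hyl⟩ := exists_apply_rev_eq_inl_of_level f hl
  obtain rfl := Sum.inl_injective (hx.symm.trans hx')
  obtain rfl := Sum.inl_injective (hy.symm.trans hy')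
  exact ⟨hxl, hyl⟩

lemma opposite_labels_mem_of_end_level {l : ℕ} (hl : l < 2 * k) {x y : CliqueVertex k n}
    (hx : f ⟨l + 1, by omega⟩ = Sum.inl x) (hy : f (Fin.rev ⟨l + 1, by omega⟩) = Sum.inl y) :
    (l = 0 → s(x.label, y.label) ∈ A) ∧ (l = 2 * k - 1 → s(x.label, y.label) ∈ B) := by
  obtain ⟨hxl, hyl⟩ := level_of_apply_eq_inl f hl hx hy
  have hlevel : x.level = y.level := hxl.trans hyl.symm
  obtain ⟨hne, hadj⟩ := ne_and_not_adj_of_add_two_le f hx hy (by grind)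
  have hside := (side_ne_and_label_ne_of_not_adj hne hlevel hadj).1
  rw [adj_inl_iff_of_opposite_side hside hlevel] at hadj
  grind

lemma opposite_labels_mem {l : ℕ} (hl : l < 2 * k) {x y : CliqueVertex k n}
    (hx : f ⟨l + 1, by omega⟩ = Sum.inl x) (hy : f (Fin.rev ⟨l + 1, by omega⟩) = Sum.inl y) :
    s(x.label, y.label) ∈ A := by
  induction l generalizing x y with
  | zero => exact (opposite_labels_mem_of_end_level f hl hx hy).1 rfl
  | succ l ih =>
    obtain ⟨hxl, hyl⟩ := level_of_apply_eq_inl f hl hx hy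
    obtain ⟨x', hfx', hx'⟩ := exists_apply_eq_inl_of_level f (l := l) (by omega)
    obtain ⟨y', hfy', hy'⟩ := exists_apply_rev_eq_inl_of_level f (l := l) (by omega)
    have hx'y : x'.label = y.label :=
      label_eq_of_not_adj (by omega) (ne_and_not_adj_of_add_two_le f hfx' hy (by grind)).2
    have hy'x : y'.label = x.label := label_eq_of_not_adj (by omega)
      (mt Adj.symm (ne_and_not_adj_of_add_two_le f hx hfy' (by grind)).2)
    rw [Sym2.eq_swap, ← hx'y, ← hy'x]
    exact ih (by omega) hfx' hfy'

end InducedPath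

lemma inter_nonempty_of_embedding (hk : 1 ≤ k) (f : pathGraph (4 * k + 3) ↪g Gkn k n A B) :
    (A ∩ B).Nonempty := by
  have hl : 2 * k - 1 < 2 * k := by omega
  obtain ⟨x, hx, _⟩ := exists_apply_eq_inl_of_level f hl
  obtain ⟨y, hy, _⟩ := exists_apply_rev_eq_inl_of_level f hl
  exact ⟨s(x.label, y.label), opposite_labels_mem f hl hx hy,
    (opposite_labels_mem_of_end_level f hl hx hy).2 rfl⟩

section Zigzag

/-- The label that the zigzag path uses in the clique of side `b` on level `l`: on every level the
two sides carry `i` and `j`, and they trade these labels from each level to the next, because an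
antimatching makes exactly the vertices with distinct labels adjacent. -/
def zigzagLabel (i j : Fin n) (b : Bool) (l : ℕ) : Fin n :=
  if b = decide (Odd l) then i else j

variable {i j : Fin n}

lemma zigzagLabel_eq_iff (hij : i ≠ j) {b c : Bool} {l : ℕ} :
    zigzagLabel i j b l = zigzagLabel i j c l ↔ b = c := by
  cases b <;> cases c <;> by_cases hl : Odd l <;> simp [zigzagLabel, hl, hij, hij.symm]

lemma zigzagLabel_succ (b : Bool) (l : ℕ) :
    zigzagLabel i j b (l + 1) = zigzagLabel i j (!b) l := by
  cases b <;> by_cases hl : Odd l <;> simp [zigzagLabel, hl, Nat.odd_add_one]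

lemma sym2_zigzagLabel {b c : Bool} (hbc : b ≠ c) (l : ℕ) :
    s(zigzagLabel i j b l, zigzagLabel i j c l) = s(i, j) := by
  cases b <;> cases c <;> by_cases hl : Odd l <;> simp_all [zigzagLabel, Sym2.eq_swap]

lemma adj_inl_iff_of_zigzagLabel (hij : i ≠ j) (hA : s(i, j) ∈ A) (hB : s(i, j) ∈ B)
    {x y : CliqueVertex k n} (hx : x.label = zigzagLabel i j x.side x.level)
    (hy : y.label = zigzagLabel i j y.side y.level) :
    (Gkn k n A B).Adj (Sum.inl x) (Sum.inl y) ↔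
      x.side = y.side ∧ (x.level + 1 = y.level ∨ y.level + 1 = x.level) := by
  by_cases hlevel : x.level = y.level
  · refine iff_of_false ?_ (by omega)
    by_cases hside : x.side = y.side
    · rw [adj_inl_iff_of_same_clique hside hlevel, hx, hy, hside, hlevel]
      exact not_not.2 rfl
    · rw [adj_inl_iff_of_opposite_side hside hlevel, hx, hy, hlevel, sym2_zigzagLabel hside,
        zigzagLabel_eq_iff hij]
      tauto
  · rw [adj_inl_iff_of_level_ne hlevel, and_comm, hx, hy]
    refine and_congr_left fun hconsecutive => ?_
    rcases hconsecutive with h | h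
    · rw [← h, zigzagLabel_succ, Ne, zigzagLabel_eq_iff hij, Bool.eq_not, not_not]
    · rw [← h, zigzagLabel_succ, Ne, zigzagLabel_eq_iff hij, Bool.not_eq, not_not]

/-- The vertices of the zigzag path: one vertex of every clique, labelled by `zigzagLabel`, and
the three special vertices. -/
def pathVertex (k : ℕ) (i j : Fin n) : (Bool × Fin (2 * k)) ⊕ Fin 3 ↪ GknVert k n where
  toFun := Sum.map (fun p => (p.1, p.2, zigzagLabel i j p.1 p.2)) id
  inj' := Sum.map_injective.2 ⟨fun p q h => by grind, Function.injective_id⟩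

/-- The positions of the vertices of the zigzag path: it runs from `v₀` up through the levels of
side `false` to `w`, and back down through the levels of side `true` to `v₁`. -/
def pathPosition (k : ℕ) : (Bool × Fin (2 * k)) ⊕ Fin 3 → Fin (4 * k + 3)
  | Sum.inl (false, l) => ⟨l + 1, by omega⟩
  | Sum.inl (true, l) => ⟨4 * k + 1 - l, by omega⟩
  | Sum.inr 0 => 0
  | Sum.inr 1 => Fin.last _
  | Sum.inr 2 => ⟨2 * k + 1, by omega⟩

lemma pathPosition_bijective : Function.Bijective (pathPosition k) := by
  have card_eq : Fintype.card ((Bool × Fin (2 * k)) ⊕ Fin 3) = Fintype.card (Fin (4 * k + 3)) := by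
    simp only [Fintype.card_sum, Fintype.card_prod, Fintype.card_bool, Fintype.card_fin]
    omega
  refine (Fintype.bijective_iff_surjective_and_card _).2 ⟨fun a => ?_, card_eq⟩
  obtain h | h | h | h | h : a.val = 0 ∨ (1 ≤ a.val ∧ a.val ≤ 2 * k) ∨ a.val = 2 * k + 1 ∨
    (2 * k + 2 ≤ a.val ∧ a.val ≤ 4 * k + 1) ∨ a.val = 4 * k + 2 := by omega
  · exact ⟨Sum.inr 0, Fin.ext h.symm⟩
  · exact ⟨Sum.inl (false, ⟨a - 1, by omega⟩), by grind [pathPosition]⟩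
  · exact ⟨Sum.inr 2, Fin.ext h.symm⟩
  · exact ⟨Sum.inl (true, ⟨4 * k + 1 - a, by omega⟩), by grind [pathPosition]⟩
  · exact ⟨Sum.inr 1, Fin.ext h.symm⟩

lemma adj_pathVertex_iff (hk : 1 ≤ k) (hij : i ≠ j) (hA : s(i, j) ∈ A) (hB : s(i, j) ∈ B)
    (u v : (Bool × Fin (2 * k)) ⊕ Fin 3) :
    (Gkn k n A B).Adj (pathVertex k i j u) (pathVertex k i j v) ↔
      (pathGraph (4 * k + 3)).Adj (pathPosition k u) (pathPosition k v) := by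
  have adj_special_iff (s : Fin 3) (p : Bool × Fin (2 * k)) :
      (Gkn k n A B).Adj (pathVertex k i j (Sum.inr s)) (pathVertex k i j (Sum.inl p)) ↔
        (pathGraph (4 * k + 3)).Adj (pathPosition k (Sum.inr s)) (pathPosition k (Sum.inl p)) := by
    obtain ⟨b, l⟩ := p
    refine adj_inr_inl_iff.trans ?_
    cases b <;> fin_cases s <;> grind [pathPosition, pathGraph_adj]
  rcases u with ⟨b, l⟩ | s <;> rcases v with ⟨c, m⟩ | t
  · refine (adj_inl_iff_of_zigzagLabel hij hA hB rfl rfl).trans ?_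
    rw [pathGraph_adj]
    cases b <;> cases c <;> grind [pathPosition]
  · rw [adj_comm, adj_special_iff, adj_comm]
  · exact adj_special_iff s (c, m)
  · refine iff_of_false not_adj_inr_inr ?_
    fin_cases s <;> fin_cases t <;> grind [pathPosition, pathGraph_adj]

lemma nonempty_embedding_of_mem_inter (hk : 1 ≤ k) (hij : i ≠ j) (hA : s(i, j) ∈ A)
    (hB : s(i, j) ∈ B) : Nonempty (pathGraph (4 * k + 3) ↪g Gkn k n A B) := by
  let iso : (Gkn k n A B).comap (pathVertex k i j) ≃g pathGraph (4 * k + 3) :=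
    { Equiv.ofBijective _ pathPosition_bijective with
      map_rel_iff' {u v} := (adj_pathVertex_iff hk hij hA hB u v).symm }
  exact ⟨(Embedding.comap (pathVertex k i j) _).comp iso.symm.toEmbedding⟩

end Zigzag

end Gkn

/-- `G_{k,n}(A,B)` contains an induced path on `4k+3` vertices
if and only if `A ∩ B ≠ ∅`. -/
theorem gkn_pathGraph_embedding_iff_inter_nonempty
    (k n : ℕ) (hk : 1 ≤ k) (hn : 1 ≤ n)
    (A B : Set (Sym2 (Fin n)))
    (hA : ∀ e ∈ A, ¬ e.IsDiag) (hB : ∀ e ∈ B, ¬ e.IsDiag) :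
    Nonempty (SimpleGraph.pathGraph (4 * k + 3) ↪g Gkn k n A B) ↔ (A ∩ B).Nonempty := by
  constructor
  · rintro ⟨f⟩
    exact Gkn.inter_nonempty_of_embedding hk f
  · rintro ⟨e, heA, heB⟩
    induction e using Sym2.ind with
    | _ i j =>
      have hij : i ≠ j := mt Sym2.mk_isDiag_iff.2 (hA _ heA)
      exact Gkn.nonempty_embedding_of_mem_inter hk hij heA heB
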